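/- Let f : {±1}^n → ℝ be a polynomial of degree at most d. Then for any 1 ≤ p ≤ 2, ‖f‖_p ≥ (p−1)^{d/2} ‖f‖_2, where the norms are the normalized ℓ_p norms on the boolean cube. -/

import Mathlib

/-!
Write `T_ρ` for the noise operator, which multiplies `f̂(S)` by `ρ ^ |S|`. Bonami's inequality
`‖T_ρ f‖_2 ≤ ‖f‖_p` for `ρ ^ 2 ≤ p - 1` follows by induction on the dimension: splitting off one
coordinate, the induction hypothesis bounds the two halves of `f`, and the halves are combined by
the two-point inequality, applied to the Fourier transforms of the halves as vectors of a Euclidean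
space. On polynomials of degree at most `d`, `T_ρ` shrinks the `ℓ_2` norm by a factor no smaller
than `ρ ^ d`; take `ρ = √(p - 1)`.
-/

noncomputable section

/-- The character `χ_S(x) = ∏_{i ∈ S} x_i` on the boolean cube, with `true ↦ -1`, `false ↦ 1`. -/
def cubeChar {n : ℕ} (S : Finset (Fin n)) (x : Fin n → Bool) : ℝ :=
  ∏ i ∈ S, (if x i then -1 else 1)

/-- The Fourier coefficient `f̂(S)` of `f : {±1}ⁿ → ℝ`. -/
def cubeFourier {n : ℕ} (f : (Fin n → Bool) → ℝ) (S : Finset (Fin n)) : ℝ :=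
  (2 ^ n : ℝ)⁻¹ * ∑ x : Fin n → Bool, f x * cubeChar S x

/-- The normalised ℓ_p norm `‖f‖_p = (2^{-n} ∑_x |f(x)|^p)^{1/p}` on the boolean cube. -/
def cubeNorm {n : ℕ} (p : ℝ) (f : (Fin n → Bool) → ℝ) : ℝ :=
  ((2 ^ n : ℝ)⁻¹ * ∑ x : Fin n → Bool, |f x| ^ p) ^ (1 / p)

section TwoPoint

lemma two_le_one_add_rpow_add_one_sub_rpow {r x : ℝ} (hr : r ≤ 0) (hx : |x| < 1) :
    2 ≤ (1 + x) ^ r + (1 - x) ^ r := by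
  obtain ⟨hx₁, hx₂⟩ := abs_lt.1 hx
  have hadd : 0 < 1 + x := by linarith
  have hsub : 0 < 1 - x := by linarith
  have hprod : 1 ≤ (1 + x) ^ r * (1 - x) ^ r := by
    rw [← Real.mul_rpow hadd.le hsub.le]
    have hle : (1 + x) * (1 - x) ≤ 1 := by nlinarith [sq_nonneg x]
    exact Real.one_le_rpow_of_pos_of_le_one_of_nonpos (mul_pos hadd hsub) hle hr
  nlinarith [sq_nonneg ((1 + x) ^ r - (1 - x) ^ r), Real.rpow_pos_of_pos hadd r,
    Real.rpow_pos_of_pos hsub r]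

variable {p : ℝ}

lemma convexOn_one_add_rpow_add_one_sub_rpow_sub (hp₁ : 1 ≤ p) (hp₂ : p ≤ 2) :
    ConvexOn ℝ (Set.Icc (-1) 1)
      fun t : ℝ => (1 + t) ^ p + (1 - t) ^ p - p * (p - 1) * t ^ 2 := by
  have hasDerivAt_add (q x : ℝ) (hx : 1 + x ≠ 0) :
      HasDerivAt (fun t : ℝ => (1 + t) ^ q) (q * (1 + x) ^ (q - 1)) x := by
    simpa using ((hasDerivAt_id x).const_add 1).rpow_const (p := q) (Or.inl hx)
  have hasDerivAt_sub (q x : ℝ) (hx : 1 - x ≠ 0) :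
      HasDerivAt (fun t : ℝ => (1 - t) ^ q) (-(q * (1 - x) ^ (q - 1))) x := by
    simpa using ((hasDerivAt_id x).const_sub 1).rpow_const (p := q) (Or.inl hx)
  refine convexOn_of_hasDerivWithinAt2_nonneg (convex_Icc _ _)
    (f' := fun x => p * ((1 + x) ^ (p - 1) - (1 - x) ^ (p - 1) - 2 * (p - 1) * x))
    (f'' := fun x => p * (p - 1) * ((1 + x) ^ (p - 2) + (1 - x) ^ (p - 2) - 2)) ?_ ?_ ?_ ?_
  · have : 0 ≤ p := by linarith
    fun_prop (disch := assumption)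
  all_goals
    rw [interior_Icc]
    rintro x ⟨hx₁, hx₂⟩
    have hadd : 1 + x ≠ 0 := by linarith
    have hsub : 1 - x ≠ 0 := by linarith
  · refine HasDerivAt.hasDerivWithinAt ?_
    exact (((hasDerivAt_add p x hadd).add (hasDerivAt_sub p x hsub)).sub
      ((hasDerivAt_pow 2 x).const_mul (p * (p - 1)))).congr_deriv (by ring)
  · refine HasDerivAt.hasDerivWithinAt ?_
    exact ((((hasDerivAt_add (p - 1) x hadd).sub (hasDerivAt_sub (p - 1) x hsub)).sub
      ((hasDerivAt_id x).const_mul (2 * (p - 1)))).const_mul p).congr_deriv (by ring_nf)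
  · have := two_le_one_add_rpow_add_one_sub_rpow (r := p - 2) (by linarith) (abs_lt.2 ⟨hx₁, hx₂⟩)
    exact mul_nonneg (mul_nonneg (by linarith) (by linarith)) (by linarith)

lemma two_add_mul_sq_le_one_add_rpow_add_one_sub_rpow (hp₁ : 1 ≤ p) (hp₂ : p ≤ 2) {t : ℝ}
    (ht : |t| ≤ 1) : 2 + p * (p - 1) * t ^ 2 ≤ (1 + t) ^ p + (1 - t) ^ p := by
  obtain ⟨ht₁, ht₂⟩ := abs_le.1 ht
  -- An even convex function attains its minimum at `0`.
  have hmid := (convexOn_one_add_rpow_add_one_sub_rpow_sub hp₁ hp₂).2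
    (show t ∈ Set.Icc (-1) 1 from ⟨ht₁, ht₂⟩)
    (show -t ∈ Set.Icc (-1) 1 from ⟨by linarith, by linarith⟩)
    one_half_pos.le one_half_pos.le (add_halves 1)
  simp only [smul_eq_mul, mul_neg, add_neg_cancel, ← sub_eq_add_neg, sub_neg_eq_add, neg_sq,
    add_zero, sub_zero, Real.one_rpow] at hmid
  linarith

lemma one_add_mul_sq_rpow_le (hp₁ : 1 ≤ p) (hp₂ : p ≤ 2) {t : ℝ} (ht : |t| ≤ 1) :
    (1 + (p - 1) * t ^ 2) ^ (p / 2) ≤ ((1 + t) ^ p + (1 - t) ^ p) / 2 := by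
  have hnonneg : 0 ≤ (p - 1) * t ^ 2 := mul_nonneg (by linarith) (sq_nonneg t)
  have hbernoulli := rpow_one_add_le_one_add_mul_self (s := (p - 1) * t ^ 2) (by linarith)
    (p := p / 2) (by linarith) (by linarith)
  linarith [two_add_mul_sq_le_one_add_rpow_add_one_sub_rpow hp₁ hp₂ ht]

lemma sq_add_mul_sq_rpow_le (hp₁ : 1 ≤ p) (hp₂ : p ≤ 2) {s t : ℝ} (hts : |t| ≤ s) :
    (s ^ 2 + (p - 1) * t ^ 2) ^ (p / 2) ≤ ((s + t) ^ p + (s - t) ^ p) / 2 := by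
  have hs : 0 ≤ s := (abs_nonneg t).trans hts
  obtain ⟨r, hr, rfl⟩ : ∃ r, |r| ≤ 1 ∧ t = s * r := by
    rcases hs.eq_or_lt with rfl | hs
    · exact ⟨0, by simp, by simpa using hts⟩
    · exact ⟨t / s, by rwa [abs_div, abs_of_pos hs, div_le_one hs], by field_simp⟩
  obtain ⟨hr₁, hr₂⟩ := abs_le.1 hr
  have hnonneg : 0 ≤ (p - 1) * r ^ 2 := mul_nonneg (by linarith) (sq_nonneg r)
  calc (s ^ 2 + (p - 1) * (s * r) ^ 2) ^ (p / 2)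
      = s ^ p * (1 + (p - 1) * r ^ 2) ^ (p / 2) := by
        rw [show s ^ 2 + (p - 1) * (s * r) ^ 2 = s ^ 2 * (1 + (p - 1) * r ^ 2) by ring,
          Real.mul_rpow (sq_nonneg s) (by linarith), Real.rpow_div_two_eq_sqrt _ (sq_nonneg s),
          Real.sqrt_sq hs]
    _ ≤ s ^ p * (((1 + r) ^ p + (1 - r) ^ p) / 2) := by
        gcongr
        exact one_add_mul_sq_rpow_le hp₁ hp₂ hr
    _ = ((s + s * r) ^ p + (s - s * r) ^ p) / 2 := by
        rw [← mul_one_add, ← mul_one_sub, Real.mul_rpow hs (by linarith),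
          Real.mul_rpow hs (by linarith)]
        ring

lemma norm_sq_add_mul_norm_sq_rpow_le {E : Type*} [NormedAddCommGroup E] [InnerProductSpace ℝ E]
    (hp₁ : 1 ≤ p) (hp₂ : p ≤ 2) (a b : E) :
    (‖a‖ ^ 2 + (p - 1) * ‖b‖ ^ 2) ^ (p / 2) ≤ (‖a + b‖ ^ p + ‖a - b‖ ^ p) / 2 := by
  set s := (‖a + b‖ + ‖a - b‖) / 2 with hs
  set t := (‖a + b‖ - ‖a - b‖) / 2 with ht
  have hts : |t| ≤ s :=
    abs_le.2 ⟨by linarith [norm_nonneg (a + b)], by linarith [norm_nonneg (a - b)]⟩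
  have hnorm : ‖a‖ ≤ s := by
    have := norm_add_le (a + b) (a - b)
    rw [add_add_sub_cancel, ← two_smul ℝ a, norm_smul, Real.norm_two] at this
    linarith
  have hsum : ‖a‖ ^ 2 + ‖b‖ ^ 2 = s ^ 2 + t ^ 2 := by
    linear_combination (-1 / 2 : ℝ) * parallelogram_law_with_norm ℝ a b
  have hle : ‖a‖ ^ 2 + (p - 1) * ‖b‖ ^ 2 ≤ s ^ 2 + (p - 1) * t ^ 2 := by
    have : 0 ≤ 2 - p := by linarith
    calc ‖a‖ ^ 2 + (p - 1) * ‖b‖ ^ 2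
        = (2 - p) * ‖a‖ ^ 2 + (p - 1) * (‖a‖ ^ 2 + ‖b‖ ^ 2) := by ring
      _ ≤ (2 - p) * s ^ 2 + (p - 1) * (s ^ 2 + t ^ 2) := by rw [hsum]; gcongr
      _ = s ^ 2 + (p - 1) * t ^ 2 := by ring
  calc (‖a‖ ^ 2 + (p - 1) * ‖b‖ ^ 2) ^ (p / 2) ≤ (s ^ 2 + (p - 1) * t ^ 2) ^ (p / 2) := by
        gcongr
    _ ≤ ((s + t) ^ p + (s - t) ^ p) / 2 := sq_add_mul_sq_rpow_le hp₁ hp₂ hts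
    _ = (‖a + b‖ ^ p + ‖a - b‖ ^ p) / 2 := by
        rw [show s + t = ‖a + b‖ by ring, show s - t = ‖a - b‖ by ring]

end TwoPoint

section Slices

variable {n : ℕ}

/-- The restriction of `f` to the face of the cube where the first coordinate is `b`. -/
def cubeSlice (f : (Fin (n + 1) → Bool) → ℝ) (b : Bool) : (Fin n → Bool) → ℝ :=
  fun x => f (Fin.cons b x)

lemma sum_cube_succ {M : Type*} [AddCommMonoid M] (F : (Fin (n + 1) → Bool) → M) :
    ∑ x, F x = ∑ x, F (Fin.cons false x) + ∑ x, F (Fin.cons true x) := by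
  rw [← (Fin.consEquiv fun _ => Bool).sum_comp, Fintype.sum_prod_type, Fintype.sum_bool, add_comm]
  rfl

lemma sum_finset_fin_succ {M : Type*} [AddCommMonoid M] (F : Finset (Fin (n + 1)) → M) :
    ∑ S, F S = ∑ S : Finset (Fin n), F (S.map (Fin.succEmb n)) +
      ∑ S : Finset (Fin n), F (insert 0 (S.map (Fin.succEmb n))) := by
  have huniv : (Finset.univ : Finset (Fin (n + 1))) =
      insert 0 (Finset.univ.image (Fin.succEmb n)) := by
    simp [Fin.univ_succ]
  rw [← Finset.powerset_univ, huniv, Finset.sum_powerset_insert (by simp), Finset.powerset_image]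
  simp only [Finset.sum_image (Finset.image_injective (Fin.succEmb n).injective).injOn,
    Finset.powerset_univ, Finset.map_eq_image]

lemma cubeChar_map_succ (S : Finset (Fin n)) (b : Bool) (x : Fin n → Bool) :
    cubeChar (S.map (Fin.succEmb n)) (Fin.cons b x) = cubeChar S x := by
  simp [cubeChar]

lemma cubeChar_insert_zero_map_succ (S : Finset (Fin n)) (b : Bool) (x : Fin n → Bool) :
    cubeChar (insert 0 (S.map (Fin.succEmb n))) (Fin.cons b x) =
      (if b then -1 else 1) * cubeChar S x := by
  simp [cubeChar]

variable (f : (Fin (n + 1) → Bool) → ℝ) (S : Finset (Fin n))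

lemma cubeFourier_map_succ :
    cubeFourier f (S.map (Fin.succEmb n)) =
      (cubeFourier (cubeSlice f false) S + cubeFourier (cubeSlice f true) S) / 2 := by
  simp only [cubeFourier, cubeSlice, sum_cube_succ, cubeChar_map_succ]
  ring

lemma cubeFourier_insert_zero_map_succ :
    cubeFourier f (insert 0 (S.map (Fin.succEmb n))) =
      (cubeFourier (cubeSlice f false) S - cubeFourier (cubeSlice f true) S) / 2 := by
  simp only [cubeFourier, cubeSlice, sum_cube_succ, cubeChar_insert_zero_map_succ, if_true,
    Bool.false_eq_true, if_false, one_mul, neg_one_mul, mul_neg, Finset.sum_neg_distrib]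
  ring

end Slices

section CubeNorm

variable {n : ℕ} {p : ℝ}

lemma cubeNorm_nonneg (p : ℝ) (f : (Fin n → Bool) → ℝ) : 0 ≤ cubeNorm p f := by
  unfold cubeNorm
  positivity

lemma cubeNorm_rpow_self (hp : p ≠ 0) (f : (Fin n → Bool) → ℝ) :
    cubeNorm p f ^ p = (2 ^ n : ℝ)⁻¹ * ∑ x, |f x| ^ p := by
  rw [cubeNorm, one_div, Real.rpow_inv_rpow (by positivity) hp]

lemma cubeNorm_rpow_succ (hp : p ≠ 0) (f : (Fin (n + 1) → Bool) → ℝ) :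
    cubeNorm p f ^ p =
      (cubeNorm p (cubeSlice f false) ^ p + cubeNorm p (cubeSlice f true) ^ p) / 2 := by
  simp only [cubeNorm_rpow_self hp, sum_cube_succ, cubeSlice]
  ring

end CubeNorm

section NoisySpectrum

variable {n : ℕ}

/-- The vector of Fourier coefficients `ρ ^ |S| * f̂(S)` of `T_ρ f`, where `T_ρ` is the noise
operator. Its Euclidean norm is `‖T_ρ f‖_2`. -/
def noisySpectrum (ρ : ℝ) (f : (Fin n → Bool) → ℝ) : EuclideanSpace ℝ (Finset (Fin n)) :=
  WithLp.toLp 2 fun S => ρ ^ S.card * cubeFourier f S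

lemma norm_noisySpectrum_sq (ρ : ℝ) (f : (Fin n → Bool) → ℝ) :
    ‖noisySpectrum ρ f‖ ^ 2 = ∑ S, (ρ ^ S.card * cubeFourier f S) ^ 2 :=
  EuclideanSpace.real_norm_sq_eq _

lemma norm_noisySpectrum_eq_cubeNorm_of_fin_zero {p : ℝ} (hp : p ≠ 0) (ρ : ℝ)
    (f : (Fin 0 → Bool) → ℝ) :
    ‖noisySpectrum ρ f‖ = cubeNorm p f := by
  obtain ⟨c, rfl⟩ : ∃ c, f = fun _ => c :=
    ⟨f default, funext fun x => congrArg f (Subsingleton.elim x default)⟩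
  have hspectrum : ‖noisySpectrum ρ fun _ : Fin 0 → Bool => c‖ ^ 2 = c ^ 2 := by
    simp [norm_noisySpectrum_sq, cubeFourier, cubeChar, Unique.default_eq (∅ : Finset (Fin 0))]
  have hnorm : cubeNorm p (fun _ : Fin 0 → Bool => c) = |c| := by
    simp [cubeNorm, Real.rpow_rpow_inv (abs_nonneg _) hp]
  rw [hnorm, ← abs_norm, ← sq_eq_sq_iff_abs_eq_abs, hspectrum]

lemma norm_noisySpectrum_sq_succ (ρ : ℝ) (f : (Fin (n + 1) → Bool) → ℝ) :
    ‖noisySpectrum ρ f‖ ^ 2 =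
      ‖(1 / 2 : ℝ) • (noisySpectrum ρ (cubeSlice f false) +
          noisySpectrum ρ (cubeSlice f true))‖ ^ 2 +
        ρ ^ 2 * ‖(1 / 2 : ℝ) • (noisySpectrum ρ (cubeSlice f false) -
          noisySpectrum ρ (cubeSlice f true))‖ ^ 2 := by
  have hmem (S : Finset (Fin n)) : (0 : Fin (n + 1)) ∉ S.map (Fin.succEmb n) := by simp
  simp only [EuclideanSpace.real_norm_sq_eq, sum_finset_fin_succ,
    cubeFourier_map_succ, cubeFourier_insert_zero_map_succ, Finset.card_map,
    Finset.card_insert_of_notMem (hmem _), Finset.mul_sum, noisySpectrum, PiLp.smul_apply,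
    PiLp.add_apply, PiLp.sub_apply, smul_eq_mul]
  congr! 2 <;> ring

theorem norm_noisySpectrum_one (f : (Fin n → Bool) → ℝ) :
    ‖noisySpectrum 1 f‖ = cubeNorm 2 f := by
  induction n with
  | zero => exact norm_noisySpectrum_eq_cubeNorm_of_fin_zero two_ne_zero 1 f
  | succ n ih =>
    rw [← sq_eq_sq₀ (norm_nonneg _) (cubeNorm_nonneg _ _), ← Real.rpow_two (cubeNorm _ _),
      cubeNorm_rpow_succ two_ne_zero, norm_noisySpectrum_sq_succ, ← ih, ← ih, norm_smul, norm_smul,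
      Real.norm_of_nonneg one_half_pos.le, Real.rpow_two, Real.rpow_two]
    linear_combination (1 / 4 : ℝ) * parallelogram_law_with_norm ℝ
      (noisySpectrum 1 (cubeSlice f false)) (noisySpectrum 1 (cubeSlice f true))

theorem norm_noisySpectrum_le_cubeNorm {p ρ : ℝ} (hp : p ≤ 2) (hρ : ρ ^ 2 ≤ p - 1)
    (f : (Fin n → Bool) → ℝ) : ‖noisySpectrum ρ f‖ ≤ cubeNorm p f := by
  have hp₁ : 1 ≤ p := by linarith [sq_nonneg ρ]
  have hp₀ : 0 < p := by linarith
  induction n with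
  | zero => exact (norm_noisySpectrum_eq_cubeNorm_of_fin_zero hp₀.ne' ρ f).le
  | succ n ih =>
    set u := noisySpectrum ρ (cubeSlice f false)
    set v := noisySpectrum ρ (cubeSlice f true)
    set a := (1 / 2 : ℝ) • (u + v) with ha
    set b := (1 / 2 : ℝ) • (u - v) with hb
    have hadd : a + b = u := by rw [ha, hb]; module
    have hsub : a - b = v := by rw [ha, hb]; module
    refine (Real.rpow_le_rpow_iff (norm_nonneg _) (cubeNorm_nonneg _ _) hp₀).1 ?_
    calc ‖noisySpectrum ρ f‖ ^ p = (‖noisySpectrum ρ f‖ ^ 2) ^ (p / 2) := by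
          rw [Real.rpow_div_two_eq_sqrt _ (sq_nonneg _), Real.sqrt_sq (norm_nonneg _)]
      _ = (‖a‖ ^ 2 + ρ ^ 2 * ‖b‖ ^ 2) ^ (p / 2) := by rw [norm_noisySpectrum_sq_succ]
      _ ≤ (‖a‖ ^ 2 + (p - 1) * ‖b‖ ^ 2) ^ (p / 2) := by gcongr
      _ ≤ (‖u‖ ^ p + ‖v‖ ^ p) / 2 := by
          simpa only [hadd, hsub] using norm_sq_add_mul_norm_sq_rpow_le hp₁ hp a b
      _ ≤ (cubeNorm p (cubeSlice f false) ^ p + cubeNorm p (cubeSlice f true) ^ p) / 2 := by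
          gcongr <;> exact ih _
      _ = cubeNorm p f ^ p := (cubeNorm_rpow_succ hp₀.ne' f).symm

lemma pow_mul_norm_noisySpectrum_one_le {d : ℕ} {ρ : ℝ} (hρ₀ : 0 ≤ ρ) (hρ₁ : ρ ≤ 1)
    {f : (Fin n → Bool) → ℝ} (hdeg : ∀ S : Finset (Fin n), d < S.card → cubeFourier f S = 0) :
    ρ ^ d * ‖noisySpectrum 1 f‖ ≤ ‖noisySpectrum ρ f‖ := by
  refine le_of_sq_le_sq ?_ (norm_nonneg _)
  rw [mul_pow, norm_noisySpectrum_sq, norm_noisySpectrum_sq, Finset.mul_sum]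
  refine Finset.sum_le_sum fun S _ => ?_
  rcases lt_or_ge d S.card with hS | hS
  · simp [hdeg S hS]
  · rw [one_pow, one_mul, mul_pow]
    have := pow_le_pow_of_le_one hρ₀ hρ₁ hS
    gcongr

end NoisySpectrum

/-- Hypercontractive norm inequality for low-degree polynomials on the boolean cube:
if `f` has degree at most `d` (all Fourier coefficients on sets of size `> d` vanish),
then for all `1 ≤ p ≤ 2`, `‖f‖_p ≥ (p-1)^{d/2} ‖f‖_2`. -/
theorem cubeNorm_ge_of_degree_le {n d : ℕ} (f : (Fin n → Bool) → ℝ)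
    (hdeg : ∀ S : Finset (Fin n), d < S.card → cubeFourier f S = 0)
    (p : ℝ) (hp1 : 1 ≤ p) (hp2 : p ≤ 2) :
    (p - 1) ^ ((d : ℝ) / 2) * cubeNorm 2 f ≤ cubeNorm p f := by
  have hp₀ : 0 ≤ p - 1 := by linarith
  calc (p - 1) ^ ((d : ℝ) / 2) * cubeNorm 2 f = √(p - 1) ^ d * ‖noisySpectrum 1 f‖ := by
        rw [Real.rpow_div_two_eq_sqrt _ hp₀, Real.rpow_natCast, norm_noisySpectrum_one]
    _ ≤ ‖noisySpectrum √(p - 1) f‖ :=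
        pow_mul_norm_noisySpectrum_one_le (Real.sqrt_nonneg _)
          (Real.sqrt_le_one.2 (by linarith)) hdeg
    _ ≤ cubeNorm p f := norm_noisySpectrum_le_cubeNorm hp2 (Real.sq_sqrt hp₀).le f
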